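/- arXiv:cs/0609138 — 3 statements merged into one kernel-verified Lean document; each statement's English description precedes it below -/
import Mathlib

section
/- Let n ≥ 2 be an integer, let γ ⊆ {1,…,n} have cardinality k with 1 ≤ k ≤ n−1, and let 0 < σ²_min < σ²_max. Define the region R = {c ∈ ℝⁿ : σ²_min ≤ S_γ(c)/k ≤ σ²_max and σ²_min ≤ (S(c) − S_γ(c))/(n−k) ≤ σ²_max}. Then ∫_R S_γ(c)^{−k/2} · (S(c) − S_γ(c))^{−(n−k)/2} dc = π^{n/2} / (Γ(k/2) Γ((n−k)/2)) · (ln(σ²_max/σ²_min))². -/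
open MeasureTheory Real Finset

/-- `Sg γ c = ∑_{i ∈ γ} c_i²`. -/
noncomputable def Sg {n : ℕ} (γ : Finset (Fin n)) (c : Fin n → ℝ) : ℝ :=
  ∑ i ∈ γ, (c i) ^ 2

/-- `Stot c = ∑_{i=1}^n c_i²`. -/
noncomputable def Stot {n : ℕ} (c : Fin n → ℝ) : ℝ :=
  ∑ i, (c i) ^ 2

lemma radial_block {ι : Type*} [Fintype ι] (d : ℕ) (hd : Fintype.card ι = d) (h1 : 1 ≤ d)
    (a b : ℝ) (ha : 0 < a) (hab : a < b) :
    ∫ x : ι → ℝ, (Set.Icc a b).indicator (fun s : ℝ => s ^ (-(d : ℝ) / 2)) (∑ i, (x i) ^ 2)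
      = π ^ ((d : ℝ) / 2) / Gamma ((d : ℝ) / 2) * log (b / a) := by
  have hne : Nonempty ι := Fintype.card_pos_iff.mp (by omega)
  have hb : 0 < b := ha.trans hab
  have hdpos : (0 : ℝ) < d := by exact_mod_cast h1
  set g : ℝ → ℝ := fun r => (Set.Icc a b).indicator (fun s : ℝ => s ^ (-(d : ℝ) / 2)) (r ^ 2) with hg
  have e1 : ∫ x : ι → ℝ, (Set.Icc a b).indicator (fun s : ℝ => s ^ (-(d : ℝ) / 2)) (∑ i, (x i) ^ 2)
      = ∫ x : EuclideanSpace ℝ ι, g ‖x‖ := by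
    rw [← (EuclideanSpace.volume_preserving_symm_measurableEquiv_toLp ι).symm.integral_comp'
      (g := fun x => g ‖x‖)]
    congr 1
    ext x
    simp [hg, EuclideanSpace.norm_sq_eq]
  rw [e1, integral_fun_norm_addHaar]
  have e2 : ∫ y in Set.Ioi (0 : ℝ), y ^ (Module.finrank ℝ (EuclideanSpace ℝ ι) - 1) • g y
      = log (b / a) / 2 := by
    have : ∀ y ∈ Set.Ioi (0 : ℝ), y ^ (Module.finrank ℝ (EuclideanSpace ℝ ι) - 1) • g y
        = (Set.Icc (√a) (√b)).indicator (fun y => y⁻¹) y := by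
      intro y hy
      have hy : 0 < y := hy
      have hiff : y ^ 2 ∈ Set.Icc a b ↔ y ∈ Set.Icc (√a) (√b) := by
        rw [Set.mem_Icc, Set.mem_Icc, Real.le_sqrt' hy, Real.sqrt_le_left hy.le]
      by_cases h : y ∈ Set.Icc (√a) (√b)
      · simp only [hg, Set.indicator_of_mem h, Set.indicator_of_mem (hiff.2 h),
          finrank_euclideanSpace, hd, smul_eq_mul]
        rw [← Real.rpow_natCast, ← Real.rpow_natCast, ← Real.rpow_mul hy.le, ← Real.rpow_add hy,
          ← Real.rpow_neg_one]
        congr 1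
        push_cast [h1]
        ring
      · simp only [hg, Set.indicator_of_notMem h, Set.indicator_of_notMem (fun h' => h (hiff.1 h')),
          smul_zero]
    rw [setIntegral_congr_fun measurableSet_Ioi this, setIntegral_indicator measurableSet_Icc]
    have : Set.Ioi (0 : ℝ) ∩ Set.Icc (√a) (√b) = Set.Icc (√a) (√b) := by
      apply Set.inter_eq_right.2
      intro y hy
      exact (Real.sqrt_pos.2 ha).trans_le hy.1
    rw [this, integral_Icc_eq_integral_Ioc, ← intervalIntegral.integral_of_le
      (Real.sqrt_le_sqrt hab.le), integral_inv_of_pos (Real.sqrt_pos.2 ha) (Real.sqrt_pos.2 hb),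
      ← Real.sqrt_div hb.le, Real.log_sqrt (by positivity)]
  rw [e2, measureReal_def, EuclideanSpace.volume_ball, finrank_euclideanSpace, hd]
  have hG : Gamma ((d : ℝ) / 2 + 1) = d / 2 * Gamma ((d : ℝ) / 2) :=
    Real.Gamma_add_one (by positivity)
  have hGp : 0 < Gamma ((d : ℝ) / 2) := Real.Gamma_pos_of_pos (by positivity)
  have hpi : √π ^ d = π ^ ((d : ℝ) / 2) := by
    rw [Real.sqrt_eq_rpow, ← Real.rpow_natCast, ← Real.rpow_mul pi_pos.le]
    congr 1; ring
  rw [hG, hpi]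
  simp only [ENNReal.ofReal_one, one_pow, one_mul, nsmul_eq_mul, smul_eq_mul]
  rw [ENNReal.toReal_ofReal (by positivity)]
  field_simp

theorem stmt_0 (n k : ℕ) (hn : 2 ≤ n) (γ : Finset (Fin n)) (hγ : γ.card = k)
    (hk1 : 1 ≤ k) (hk2 : k ≤ n - 1) (σmin σmax : ℝ) (h0 : 0 < σmin) (hσ : σmin < σmax) :
    ∫ c in {c : Fin n → ℝ |
        σmin ≤ Sg γ c / k ∧ Sg γ c / k ≤ σmax ∧
        σmin ≤ (Stot c - Sg γ c) / ((n : ℝ) - k) ∧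
        (Stot c - Sg γ c) / ((n : ℝ) - k) ≤ σmax},
      (Sg γ c) ^ (-(k : ℝ) / 2) * (Stot c - Sg γ c) ^ (-((n : ℝ) - k) / 2)
    = Real.pi ^ ((n : ℝ) / 2) / (Real.Gamma ((k : ℝ) / 2) * Real.Gamma (((n : ℝ) - k) / 2))
      * (Real.log (σmax / σmin)) ^ 2 := by
  obtain ⟨m, rfl⟩ : ∃ m, n = k + m := ⟨n - k, by omega⟩
  have hm : 1 ≤ m := by omega
  have hmr : ((k + m : ℕ) : ℝ) - k = m := by push_cast; ring
  have hkp : (0 : ℝ) < k := by exact_mod_cast hk1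
  have hmp : (0 : ℝ) < m := by exact_mod_cast hm
  rw [hmr]
  have hexp : -(((k + m : ℕ) : ℝ) - k) / 2 = -(m : ℝ) / 2 := by rw [hmr]
  have hS : ∀ c : Fin (k + m) → ℝ, Sg γ c = ∑ i : {i // i ∈ γ}, (c i) ^ 2 := by
    intro c
    exact (Finset.sum_coe_sort γ (fun i => (c i) ^ 2)).symm
  have hT : ∀ c : Fin (k + m) → ℝ, Stot c - Sg γ c = ∑ i : {i // ¬ i ∈ γ}, (c i) ^ 2 := by
    intro c
    rw [hS, Stot, ← Fintype.sum_subtype_add_sum_subtype (fun i => i ∈ γ) (fun i => (c i) ^ 2),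
      sub_eq_iff_eq_add, add_comm]
    congr 1
    exact Finset.sum_congr (by ext; simp) (fun _ _ => rfl)
  have hmeas : MeasurableSet {c : Fin (k + m) → ℝ |
        σmin ≤ Sg γ c / k ∧ Sg γ c / k ≤ σmax ∧
        σmin ≤ (Stot c - Sg γ c) / (m : ℝ) ∧
        (Stot c - Sg γ c) / (m : ℝ) ≤ σmax} := by
    have m1 : Measurable (fun c : Fin (k + m) → ℝ => Sg γ c) := by unfold Sg; fun_prop
    have m2 : Measurable (fun c : Fin (k + m) → ℝ => Stot c) := by unfold Stot; fun_prop
    simp only [Set.ofPred_and]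
    refine MeasurableSet.inter ?_ (MeasurableSet.inter ?_ (MeasurableSet.inter ?_ ?_)) <;>
      exact measurableSet_le (by fun_prop) (by fun_prop)
  rw [← integral_indicator hmeas]
  let F : ({i // i ∈ γ} → ℝ) → ℝ := fun x =>
    (Set.Icc (k * σmin) (k * σmax)).indicator (fun s : ℝ => s ^ (-(k : ℝ) / 2)) (∑ i, (x i) ^ 2)
  let G : ({i // ¬ i ∈ γ} → ℝ) → ℝ := fun x =>
    (Set.Icc (m * σmin) (m * σmax)).indicator (fun s : ℝ => s ^ (-(m : ℝ) / 2)) (∑ i, (x i) ^ 2)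
  have hF : ∫ x, F x = _ := radial_block k (by simp [hγ]) hk1 (k * σmin) (k * σmax)
    (by positivity) (by gcongr)
  have hG : ∫ x, G x = _ := radial_block m
    (by rw [Fintype.card_subtype_compl]; simp [hγ]) hm (m * σmin) (m * σmax)
    (by positivity) (by gcongr)
  rw [mul_div_mul_left _ _ (ne_of_gt hkp)] at hF
  rw [mul_div_mul_left _ _ (ne_of_gt hmp)] at hG
  have key := (volume_preserving_piEquivPiSubtypeProd (fun _ : Fin (k + m) => ℝ)
    (fun i => i ∈ γ)).integral_comp' (g := fun z => F z.1 * G z.2)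
  rw [Subsingleton.elim (Subtype.fintype fun i => i ∈ γ) (Finset.Subtype.fintype γ)] at key
  have hprod : ∫ z : ({i // i ∈ γ} → ℝ) × ({i // ¬ i ∈ γ} → ℝ), F z.1 * G z.2
      = (∫ x, F x) * ∫ y, G y := integral_prod_mul F G
  have hR : π ^ (((k + m : ℕ) : ℝ) / 2) = π ^ ((k : ℝ) / 2) * π ^ ((m : ℝ) / 2) := by
    rw [← Real.rpow_add pi_pos]; congr 1; push_cast; ring
  trans (∫ x, F x) * ∫ y, G y
  · rw [← hprod]
    refine Eq.trans ?_ key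
    congr 1
    ext c
    have p1 : F ((MeasurableEquiv.piEquivPiSubtypeProd (fun _ : Fin (k + m) => ℝ)
      (fun i => i ∈ γ)) c).1 = (Set.Icc (k * σmin) (k * σmax)).indicator
        (fun s : ℝ => s ^ (-(k : ℝ) / 2)) (Sg γ c) := by rw [hS]; rfl
    have p2 : G ((MeasurableEquiv.piEquivPiSubtypeProd (fun _ : Fin (k + m) => ℝ)
      (fun i => i ∈ γ)) c).2 = (Set.Icc (m * σmin) (m * σmax)).indicator
        (fun s : ℝ => s ^ (-(m : ℝ) / 2)) (Stot c - Sg γ c) := by rw [hT]; rfl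
    rw [p1, p2]
    simp only [Set.indicator_apply, Set.mem_ofPred_eq, Set.mem_Icc, le_div_iff₀ hkp,
      div_le_iff₀ hkp, le_div_iff₀ hmp, div_le_iff₀ hmp, mul_comm (k : ℝ), mul_comm (m : ℝ), hexp]
    split_ifs <;> first | (simp; done) | (exfalso; tauto)
  · rw [hF, hG, hR]
    ring
end

section
/- Let n ≥ 2 be an integer, let γ ⊆ {1,…,n} have cardinality k with 1 ≤ k ≤ n−1, and let 0 < σ²_min < σ²_max. Define R = {c ∈ ℝⁿ : σ²_min ≤ S_γ(c)/k ≤ σ²_max and σ²_min ≤ (S(c) − S_γ(c))/(n−k) ≤ σ²_max} and R′ = R ∩ {c ∈ ℝⁿ : S_γ(c)/k ≥ (S(c) − S_γ(c))/(n−k)}. Then ∫_{R′} S_γ(c)^{−k/2} (S(c) − S_γ(c))^{−(n−k)/2} dc = (1/2) · ∫_R S_γ(c)^{−k/2} (S(c) − S_γ(c))^{−(n−k)/2} dc; that is, imposing the constraint that the informative variance estimate is at least the noise variance estimate changes the normalized-maximum-likelihood code length by exactly one bit (ln 2 nats). -/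
open MeasureTheory Real Finset

noncomputable def ffun (a b : ℝ) : ℝ → ℝ := (Set.Icc a b).indicator (fun r => r⁻¹)

noncomputable def gfun (a b : ℝ) (d : ℕ) (r : ℝ) : ℝ :=
  (Set.Icc a b).indicator (fun _ => (r ^ d)⁻¹) (r / √d)

lemma gfun_mul (a b : ℝ) (d : ℕ) (hd : 1 ≤ d) (r : ℝ) (hr : 0 < r) :
    r ^ (d - 1) * gfun a b d r = (√d)⁻¹ * ffun a b (r / √d) := by
  have hd0 : (0:ℝ) < √d := Real.sqrt_pos.2 (by exact_mod_cast hd)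
  obtain ⟨e, rfl⟩ : ∃ e, d = e + 1 := ⟨d - 1, by omega⟩
  unfold gfun ffun Set.indicator
  split_ifs
  · simp only [Nat.add_sub_cancel]
    field_simp
    ring
  · simp

lemma radial {E : Type*} [NormedAddCommGroup E] [InnerProductSpace ℝ E] [FiniteDimensional ℝ E]
    [Nontrivial E] [MeasurableSpace E] [BorelSpace E] (a b : ℝ) (ha : 0 < a) (d : ℕ)
    (hd : Module.finrank ℝ E = d) (h : ℝ → ℝ) :
    ∫ x : E, gfun a b d ‖x‖ * h (‖x‖ / √d) =
      (d * volume.real (Metric.ball (0:E) 1)) * ∫ r, ffun a b r * h r := by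
  have hd1 : 1 ≤ d := by rw [← hd]; exact Module.finrank_pos
  have hd0 : (0:ℝ) < √d := Real.sqrt_pos.2 (by exact_mod_cast hd1)
  have := integral_fun_norm_addHaar (volume : Measure E) (fun r => gfun a b d r * h (r / √d))
  rw [this, hd]
  have e1 : ∫ y in Set.Ioi (0:ℝ), y ^ (d - 1) • (gfun a b d y * h (y / √d)) =
      ∫ y in Set.Ioi (0:ℝ), (fun r => (√d)⁻¹ * (ffun a b r * h r)) ((√d)⁻¹ * y) := by
    refine setIntegral_congr_fun measurableSet_Ioi fun y hy => ?_
    have := gfun_mul a b d hd1 y hy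
    simp only [smul_eq_mul]
    rw [← mul_assoc, this, inv_mul_eq_div]
    ring_nf
  rw [e1, integral_comp_mul_left_Ioi (fun r => (√d)⁻¹ * (ffun a b r * h r)) 0 (inv_pos.2 hd0),
    mul_zero, inv_inv, integral_const_mul]
  have e2 : ∫ r in Set.Ioi (0:ℝ), ffun a b r * h r = ∫ r, ffun a b r * h r := by
    refine setIntegral_eq_integral_of_forall_compl_eq_zero fun x hx => ?_
    have : x ∉ Set.Icc a b := fun h => hx (ha.trans_le h.1)
    simp [ffun, this]
  rw [e2]
  simp only [smul_eq_mul, nsmul_eq_mul]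
  field_simp

lemma ffun_integrable (a b : ℝ) (ha : 0 < a) : Integrable (ffun a b) := by
  unfold ffun
  rw [integrable_indicator_iff measurableSet_Icc]
  refine ContinuousOn.integrableOn_compact isCompact_Icc ?_
  exact continuousOn_id.inv₀ fun x hx => (ha.trans_le hx.1).ne'

lemma gfun_integrable {E : Type*} [NormedAddCommGroup E] [InnerProductSpace ℝ E]
    [FiniteDimensional ℝ E]
    [Nontrivial E] [MeasurableSpace E] [BorelSpace E] (a b : ℝ) (ha : 0 < a) (d : ℕ)
    (hd : Module.finrank ℝ E = d) : Integrable (fun x : E => gfun a b d ‖x‖) := by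
  have hd1 : 1 ≤ d := by rw [← hd]; exact Module.finrank_pos
  have hd0 : (0:ℝ) < √d := Real.sqrt_pos.2 (by exact_mod_cast hd1)
  rw [integrable_fun_norm_addHaar (volume : Measure E) (f := gfun a b d), hd]
  have : Integrable (fun y => (√d)⁻¹ * ffun a b (y / √d)) :=
    ((ffun_integrable a b ha).comp_div hd0.ne').const_mul _
  refine (this.integrableOn (s := Set.Ioi 0)).congr_fun (fun y hy => ?_) measurableSet_Ioi
  exact (gfun_mul a b d hd1 y hy).symm

lemma pair {E F : Type*} [NormedAddCommGroup E] [InnerProductSpace ℝ E] [FiniteDimensional ℝ E]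
    [Nontrivial E] [MeasurableSpace E] [BorelSpace E]
    [NormedAddCommGroup F] [InnerProductSpace ℝ F] [FiniteDimensional ℝ F]
    [Nontrivial F] [MeasurableSpace F] [BorelSpace F] (a b : ℝ) (ha : 0 < a) (d m : ℕ)
    (hd : Module.finrank ℝ E = d) (hm : Module.finrank ℝ F = m) (T : Set (ℝ × ℝ))
    (hT : MeasurableSet T) :
    ∫ z : E × F, gfun a b d ‖z.1‖ * gfun a b m ‖z.2‖ *
        T.indicator 1 (‖z.1‖ / √d, ‖z.2‖ / √m) =
      (d * volume.real (Metric.ball (0:E) 1)) * (m * volume.real (Metric.ball (0:F) 1)) *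
        ∫ r, ffun a b r * ∫ s, ffun a b s * T.indicator 1 (r, s) := by
  have hint : Integrable (fun z : E × F => gfun a b d ‖z.1‖ * gfun a b m ‖z.2‖ *
        T.indicator 1 (‖z.1‖ / √d, ‖z.2‖ / √m)) (volume.prod volume) := by
    refine ((gfun_integrable a b ha d hd).mul_prod (gfun_integrable a b ha m hm)).mul_bdd
      (c := 1) ?_ ?_
    · apply Measurable.aestronglyMeasurable
      exact (measurable_one.indicator hT).comp (by fun_prop)
    · refine Filter.Eventually.of_forall fun z => ?_
      unfold Set.indicator
      split_ifs <;> simp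
  rw [Measure.volume_eq_prod, integral_prod _ hint]
  have e (x : E) : ∫ y : F, gfun a b d ‖x‖ * gfun a b m ‖y‖ *
        T.indicator 1 (‖x‖ / √d, ‖y‖ / √m) = gfun a b d ‖x‖ * 
        (fun r => (m * volume.real (Metric.ball (0:F) 1)) *
          ∫ s, ffun a b s * T.indicator 1 (r, s)) (‖x‖ / √d) := by
    simp only [mul_assoc]
    rw [integral_const_mul, radial a b ha m hm (fun s => T.indicator 1 (‖x‖ / √d, s))]
    ring
  simp only [e]
  rw [radial a b ha d hd (fun r => (m * volume.real (Metric.ball (0:F) 1)) *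
          ∫ s, ffun a b s * T.indicator 1 (r, s)), mul_assoc (d * volume.real (Metric.ball (0:E) 1)),
    ← integral_const_mul (m * volume.real (Metric.ball (0:F) 1))]
  congr 2
  funext r
  ring

lemma half (a b : ℝ) (ha : 0 < a) :
    ∫ r, ffun a b r * ∫ s, ffun a b s * {p : ℝ × ℝ | p.2 ≤ p.1}.indicator 1 (r, s) =
    1 / 2 * ∫ r, ffun a b r * ∫ s, ffun a b s * (Set.univ : Set (ℝ × ℝ)).indicator 1 (r, s) := by
  have hf := ffun_integrable a b ha
  have hT1 : MeasurableSet {p : ℝ × ℝ | p.2 ≤ p.1} := measurableSet_le measurable_snd measurable_fst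
  have hT2 : MeasurableSet {p : ℝ × ℝ | p.1 ≤ p.2} := measurableSet_le measurable_fst measurable_snd
  have hint (T : Set (ℝ × ℝ)) (hT : MeasurableSet T) :
      Integrable (fun z : ℝ × ℝ => ffun a b z.1 * ffun a b z.2 * T.indicator 1 z)
        (volume.prod volume) := by
    refine (hf.mul_prod hf).mul_bdd (c := 1) ?_ ?_
    · exact (measurable_one.indicator hT).aestronglyMeasurable
    · refine Filter.Eventually.of_forall fun z => ?_
      unfold Set.indicator
      split_ifs <;> simp
  have hI (T : Set (ℝ × ℝ)) (hT : MeasurableSet T) :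
      ∫ r, ffun a b r * ∫ s, ffun a b s * T.indicator 1 (r, s) =
      ∫ z : ℝ × ℝ, ffun a b z.1 * ffun a b z.2 * T.indicator 1 z ∂(volume.prod volume) := by
    rw [integral_prod _ (hint T hT)]
    simp only [mul_assoc, integral_const_mul]
  have hswap : ∫ z : ℝ × ℝ, ffun a b z.1 * ffun a b z.2 * {p : ℝ × ℝ | p.2 ≤ p.1}.indicator 1 z
        ∂(volume.prod volume) = 
      ∫ z : ℝ × ℝ, ffun a b z.1 * ffun a b z.2 * {p : ℝ × ℝ | p.1 ≤ p.2}.indicator 1 z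
        ∂(volume.prod volume) := by
    rw [← integral_prod_swap]
    congr 1
    ext z
    simp only [Prod.fst_swap, Prod.snd_swap, Set.indicator, Set.mem_ofPred_eq]
    rw [mul_comm (ffun a b z.2)]
    rfl
  have hsum : (∫ r, ffun a b r * ∫ s, ffun a b s * {p : ℝ × ℝ | p.2 ≤ p.1}.indicator 1 (r, s)) +
      (∫ r, ffun a b r * ∫ s, ffun a b s * {p : ℝ × ℝ | p.1 ≤ p.2}.indicator 1 (r, s)) =
      ∫ r, ffun a b r * ∫ s, ffun a b s * (Set.univ : Set (ℝ × ℝ)).indicator 1 (r, s) := by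
    have hi (T : Set (ℝ × ℝ)) (hT : MeasurableSet T) :
        Integrable (fun r => ffun a b r * ∫ s, ffun a b s * T.indicator 1 (r, s)) := by
      have := (hint T hT).integral_prod_left
      simpa only [mul_assoc, integral_const_mul] using this
    rw [← integral_add (hi _ hT1) (hi _ hT2)]
    congr 1
    ext r
    have hj (T : Set (ℝ × ℝ)) (hT : MeasurableSet T) :
        Integrable (fun s => ffun a b s * T.indicator 1 (r, s)) := by
      refine hf.mul_bdd (c := 1) ?_ ?_
      · exact ((measurable_one.indicator hT).comp measurable_prodMk_left).aestronglyMeasurable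
      · refine Filter.Eventually.of_forall fun z => ?_
        unfold Set.indicator
        split_ifs <;> simp
    rw [← mul_add, ← integral_add (hj _ hT1) (hj _ hT2)]
    congr 1
    apply integral_congr_ae
    have : ∀ᵐ s : ℝ, s ≠ r := by simp [ae_iff]
    filter_upwards [this] with s hs
    rcases lt_or_gt_of_ne hs with h | h
    · simp [Set.indicator, h.le, h.not_ge]
    · simp [Set.indicator, h.le, h.not_ge]
  rw [← hsum, hI _ hT1, hI _ hT2, ← hswap]
  ring

noncomputable def blk {n : ℕ} (γ : Finset (Fin n)) : (Fin n → ℝ) ≃ᵐ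
    EuclideanSpace ℝ {i // i ∈ γ} × EuclideanSpace ℝ {i // i ∉ γ} :=
  (MeasurableEquiv.piEquivPiSubtypeProd (fun _ => ℝ) (fun i => i ∈ γ)).trans
    (MeasurableEquiv.prodCongr (MeasurableEquiv.toLp 2 _) (MeasurableEquiv.toLp 2 _))

lemma blk_mp {n : ℕ} (γ : Finset (Fin n)) : MeasurePreserving (blk γ) := by
  have h1 := volume_preserving_piEquivPiSubtypeProd (fun _ : Fin n => ℝ) (fun i => i ∈ γ)
  have h2 := (PiLp.volume_preserving_toLp {i // i ∈ γ}).prod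
    (PiLp.volume_preserving_toLp {i // i ∉ γ})
  rw [← Measure.volume_eq_prod, ← Measure.volume_eq_prod] at h2
  rw [Subsingleton.elim (Subtype.fintype fun i => i ∈ γ) (Finset.Subtype.fintype γ)] at h1
  exact h2.comp h1

lemma blk_fst {n : ℕ} (γ : Finset (Fin n)) (c : Fin n → ℝ) : Sg γ c = ‖(blk γ c).1‖ ^ 2 := by
  rw [EuclideanSpace.real_norm_sq_eq]
  unfold Sg
  rw [← Finset.sum_coe_sort]
  rfl

lemma blk_snd {n : ℕ} (γ : Finset (Fin n)) (c : Fin n → ℝ) :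
    Stot c - Sg γ c = ‖(blk γ c).2‖ ^ 2 := by
  rw [EuclideanSpace.real_norm_sq_eq]
  unfold Sg Stot
  rw [← Finset.sum_add_sum_compl γ, add_sub_cancel_left,
    Finset.sum_subtype (p := fun i => i ∉ γ) _ (by simp)]
  rfl

lemma pow_gfun (σmin σmax : ℝ) (h0 : 0 < σmin) (hσ : σmin < σmax) (d : ℕ) (hd : 1 ≤ d) (r : ℝ)
    (hr : 0 ≤ r) : gfun (√σmin) (√σmax) d r =
      if σmin ≤ r ^ 2 / d ∧ r ^ 2 / d ≤ σmax then (r ^ 2) ^ (-(d:ℝ) / 2) else 0 := by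
  have hd0 : (0:ℝ) < √d := Real.sqrt_pos.2 (by exact_mod_cast hd)
  have e : (r / √d) ^ 2 = r ^ 2 / d := by rw [div_pow, Real.sq_sqrt (by positivity)]
  have hm : r / √d ∈ Set.Icc (√σmin) (√σmax) ↔ σmin ≤ r ^ 2 / d ∧ r ^ 2 / d ≤ σmax := by
    rw [← e, Set.mem_Icc, Real.sqrt_le_left (by positivity),
      Real.le_sqrt (by positivity) (h0.trans hσ).le]
  have e2 : (r ^ 2) ^ (-(d:ℝ) / 2) = (r ^ d)⁻¹ := by
    rw [← Real.rpow_natCast r 2, ← Real.rpow_mul hr, ← Real.rpow_natCast r d, ← Real.rpow_neg hr]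
    congr 1
    push_cast
    ring
  unfold gfun Set.indicator
  simp only [hm, e2]

lemma ite_aux (Q A B T : Prop) [Decidable Q] [Decidable A] [Decidable B] [Decidable T]
    (h : Q ↔ A ∧ B ∧ T) (x y : ℝ) : (if Q then x * y else 0) =
      (if A then x else 0) * (if B then y else 0) * (if T then 1 else 0) := by
  by_cases hA : A <;> by_cases hB : B <;> by_cases hT : T <;> simp [h, hA, hB, hT]

theorem stmt_1 (n k : ℕ) (hn : 2 ≤ n) (γ : Finset (Fin n)) (hγ : γ.card = k)
    (hk1 : 1 ≤ k) (hk2 : k ≤ n - 1) (σmin σmax : ℝ) (h0 : 0 < σmin) (hσ : σmin < σmax)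
    (R : Set (Fin n → ℝ))
    (hR : R = {c : Fin n → ℝ |
        σmin ≤ Sg γ c / k ∧ Sg γ c / k ≤ σmax ∧
        σmin ≤ (Stot c - Sg γ c) / ((n : ℝ) - k) ∧
        (Stot c - Sg γ c) / ((n : ℝ) - k) ≤ σmax})
    (R' : Set (Fin n → ℝ))
    (hR' : R' = R ∩ {c : Fin n → ℝ | (Stot c - Sg γ c) / ((n : ℝ) - k) ≤ Sg γ c / k}) :
    ∫ c in R', (Sg γ c) ^ (-(k : ℝ) / 2) * (Stot c - Sg γ c) ^ (-((n : ℝ) - k) / 2)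
    = (1 / 2) *
      ∫ c in R, (Sg γ c) ^ (-(k : ℝ) / 2) * (Stot c - Sg γ c) ^ (-((n : ℝ) - k) / 2) := by
  obtain ⟨m, rfl⟩ : ∃ m, n = k + m := ⟨n - k, by omega⟩
  have hm1 : 1 ≤ m := by omega
  have hcast : (((k + m : ℕ) : ℝ) - k) = m := by push_cast; ring
  simp only [hcast] at hR hR' ⊢
  have hk0 : (0:ℝ) < √k := Real.sqrt_pos.2 (by exact_mod_cast hk1)
  have hm0 : (0:ℝ) < √m := Real.sqrt_pos.2 (by exact_mod_cast hm1)
  have hdE : Module.finrank ℝ (EuclideanSpace ℝ {i // i ∈ γ}) = k := by simp [hγ]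
  have hdF : Module.finrank ℝ (EuclideanSpace ℝ {i // i ∉ γ}) = m := by
    simp [Fintype.card_subtype_compl, hγ]
  have : Nontrivial (EuclideanSpace ℝ {i // i ∈ γ}) :=
    Module.nontrivial_of_finrank_pos (R := ℝ) (by omega)
  have : Nontrivial (EuclideanSpace ℝ {i // i ∉ γ}) :=
    Module.nontrivial_of_finrank_pos (R := ℝ) (by omega)
  have ha : 0 < √σmin := Real.sqrt_pos.2 h0
  have hSm : Measurable (fun c : Fin (k + m) → ℝ => Sg γ c) := by unfold Sg; fun_prop
  have hTm : Measurable (fun c : Fin (k + m) → ℝ => Stot c) := by unfold Stot; fun_prop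
  have hRm : MeasurableSet R := by
    rw [hR]
    have h1 : Measurable (fun c : Fin (k + m) → ℝ => Sg γ c / k) := by fun_prop
    have h2 : Measurable (fun c : Fin (k + m) → ℝ => (Stot c - Sg γ c) / m) := by fun_prop
    exact (measurableSet_le measurable_const h1).inter
      ((measurableSet_le h1 measurable_const).inter
      ((measurableSet_le measurable_const h2).inter (measurableSet_le h2 measurable_const)))
  have hRm' : MeasurableSet R' := by
    rw [hR']
    exact hRm.inter (measurableSet_le (by fun_prop) (by fun_prop))
  have hT1 : MeasurableSet {p : ℝ × ℝ | p.2 ≤ p.1} := measurableSet_le measurable_snd measurable_fst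
  have key (T : Set (ℝ × ℝ)) (hT : MeasurableSet T) (Q : Set (Fin (k + m) → ℝ))
      (hQm : MeasurableSet Q)
      (hQ : ∀ c, c ∈ Q ↔ c ∈ R ∧ (‖(blk γ c).1‖ / √k, ‖(blk γ c).2‖ / √m) ∈ T) :
      ∫ c in Q, (Sg γ c) ^ (-(k : ℝ) / 2) * (Stot c - Sg γ c) ^ (-(m:ℝ) / 2) =
      ∫ z : EuclideanSpace ℝ {i // i ∈ γ} × EuclideanSpace ℝ {i // i ∉ γ},
        gfun (√σmin) (√σmax) k ‖z.1‖ * gfun (√σmin) (√σmax) m ‖z.2‖ *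
        T.indicator 1 (‖z.1‖ / √k, ‖z.2‖ / √m) := by
    rw [← (blk_mp γ).integral_comp', ← integral_indicator hQm]
    congr 1
    ext c
    rw [pow_gfun _ _ h0 hσ k hk1 _ (norm_nonneg _), pow_gfun _ _ h0 hσ m hm1 _ (norm_nonneg _)]
    have hQc := hQ c
    rw [hR, Set.mem_ofPred_eq, blk_snd, blk_fst] at hQc
    simp only [Set.indicator, blk_snd, Pi.one_apply]
    simp only [blk_fst]
    classical
    refine Eq.trans ?_ (ite_aux (c ∈ Q) _ _ _ (by rw [hQc]; simp only [and_assoc]) _ _)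
    congr
  rw [key _ hT1 R' hRm' ?_, key Set.univ MeasurableSet.univ R hRm (by simp),
    pair _ _ ha k m hdE hdF _ hT1, pair _ _ ha k m hdE hdF _ MeasurableSet.univ, half _ _ ha]
  · ring
  · intro c
    rw [hR', Set.mem_inter_iff, Set.mem_ofPred_eq, Set.mem_ofPred_eq, blk_snd, blk_fst]
    have e1 : ‖(blk γ c).1‖ ^ 2 / k = (‖(blk γ c).1‖ / √k) ^ 2 := by
      rw [div_pow, Real.sq_sqrt (by positivity)]
    have e2 : ‖(blk γ c).2‖ ^ 2 / m = (‖(blk γ c).2‖ / √m) ^ 2 := by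
      rw [div_pow, Real.sq_sqrt (by positivity)]
    rw [e1, e2, sq_le_sq₀ (by positivity) (by positivity)]
end

section
/- Let n ≥ 1 and B ≥ 0 be integers, let γ_0, γ_1, …, γ_B be a partition of {1,…,n} with |γ_b| = k_b ≥ 1 for each b, and let 0 < σ²_min < σ²_max. Then ∫ over the region {c ∈ ℝⁿ : σ²_min ≤ S_{γ_b}(c)/k_b ≤ σ²_max for all b = 0,…,B} of Π_{b=0}^{B} S_{γ_b}(c)^{−k_b/2} dc = π^{n/2} · (ln(σ²_max/σ²_min))^{B+1} / Π_{b=0}^{B} Γ(k_b/2). -/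
open MeasureTheory Real Finset

theorem aux_curry {ι : Type*} [Fintype ι] (κ : ι → Type*) [∀ i, Fintype (κ i)] :
    MeasurePreserving (MeasurableEquiv.piCurry (fun (i : ι) (_ : κ i) => ℝ)).symm
      volume volume := by
  refine ⟨MeasurableEquiv.measurable _, (Measure.pi_eq fun s _ => ?_).symm⟩
  have : (MeasurableEquiv.piCurry (fun (i : ι) (_ : κ i) => ℝ)).symm ⁻¹' Set.pi Set.univ s
      = Set.pi Set.univ (fun i => Set.pi Set.univ (fun j => s ⟨i, j⟩)) := by
    ext y
    simp [MeasurableEquiv.coe_piCurry_symm, Sigma.uncurry, Sigma.forall]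
  rw [MeasurableEquiv.map_apply, this, volume_pi, Measure.pi_pi]
  simp only [volume_pi, Measure.pi_pi]
  rw [Fintype.prod_sigma]

theorem aux_radial (k : ℕ) (hk : 1 ≤ k) (a b : ℝ) (ha : 0 < a) (hab : a < b) :
    ∫ y in Set.Ioi (0 : ℝ), y ^ (k - 1) •
      (Set.Icc a b).indicator (fun s : ℝ => s ^ (-(k : ℝ) / 2)) (y ^ 2)
    = Real.log (b / a) / 2 := by
  have hb : 0 < b := ha.trans hab
  have h1 : ∀ y ∈ Set.Ioi (0 : ℝ), y ^ (k - 1) •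
      (Set.Icc a b).indicator (fun s : ℝ => s ^ (-(k : ℝ) / 2)) (y ^ 2)
      = (Set.Icc (√a) (√b)).indicator (fun y : ℝ => y⁻¹) y := by
    intro y hy
    have hy : 0 < y := hy
    have hiff : y ^ 2 ∈ Set.Icc a b ↔ y ∈ Set.Icc (√a) (√b) := by
      rw [Set.mem_Icc, Set.mem_Icc, Real.sqrt_le_left hy.le, Real.le_sqrt' hy]
    by_cases h : y ∈ Set.Icc (√a) (√b)
    · rw [Set.indicator_of_mem h, Set.indicator_of_mem (hiff.2 h)]
      have : (y ^ 2) ^ (-(k : ℝ) / 2) = (y ^ k)⁻¹ := by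
        rw [← Real.rpow_natCast y 2, ← Real.rpow_mul hy.le, ← Real.rpow_natCast y k,
          ← Real.rpow_neg hy.le]
        congr 1
        push_cast
        ring
      rw [this, smul_eq_mul]
      obtain ⟨m, rfl⟩ : ∃ m, k = m + 1 := ⟨k - 1, by omega⟩
      simp only [Nat.add_sub_cancel, pow_succ]
      field_simp
    · rw [Set.indicator_of_notMem h, Set.indicator_of_notMem (fun h' => h (hiff.1 h'))]
      simp
  rw [setIntegral_congr_fun measurableSet_Ioi h1, setIntegral_indicator measurableSet_Icc]
  have h2 : Set.Ioi (0 : ℝ) ∩ Set.Icc (√a) (√b) = Set.Icc (√a) (√b) := by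
    apply Set.inter_eq_right.2
    intro y hy
    exact lt_of_lt_of_le (Real.sqrt_pos.2 ha) hy.1
  rw [h2, integral_Icc_eq_integral_Ioc,
    ← intervalIntegral.integral_of_le (Real.sqrt_le_sqrt hab.le),
    integral_inv_of_pos (Real.sqrt_pos.2 ha) (Real.sqrt_pos.2 hb),
    ← Real.sqrt_div hb.le, Real.log_sqrt (by positivity)]

theorem aux_block {ι : Type*} [Fintype ι] (k : ℕ) (hk : Fintype.card ι = k) (hk1 : 1 ≤ k)
    (a b : ℝ) (ha : 0 < a) (hab : a < b) :
    ∫ x : ι → ℝ, (Set.Icc a b).indicator (fun s : ℝ => s ^ (-(k : ℝ) / 2)) (∑ i, x i ^ 2)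
    = Real.pi ^ ((k : ℝ) / 2) * Real.log (b / a) / Real.Gamma ((k : ℝ) / 2) := by
  have hne : Nonempty ι := Fintype.card_pos_iff.1 (by omega)
  have hnt : Nontrivial (EuclideanSpace ℝ ι) := inferInstance
  have h1 := integral_fun_norm_addHaar (volume : Measure (EuclideanSpace ℝ ι))
    (fun r : ℝ => (Set.Icc a b).indicator (fun s : ℝ => s ^ (-(k : ℝ) / 2)) (r ^ 2))
  rw [finrank_euclideanSpace, hk, aux_radial k hk1 a b ha hab] at h1
  rw [← (PiLp.volume_preserving_toLp ι).integral_comp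
    (MeasurableEquiv.toLp 2 (ι → ℝ)).measurableEmbedding] at h1
  simp only [EuclideanSpace.real_norm_sq_eq] at h1
  rw [h1, Measure.real, EuclideanSpace.volume_ball, hk]
  have hk0 : (0 : ℝ) < k := by exact_mod_cast hk1
  have hG : 0 < Real.Gamma ((k : ℝ) / 2) := Real.Gamma_pos_of_pos (by positivity)
  rw [Real.Gamma_add_one (by positivity)]
  rw [ENNReal.ofReal_one, one_pow, one_mul, ENNReal.toReal_ofReal (by positivity)]
  have : √Real.pi ^ k = Real.pi ^ ((k : ℝ) / 2) := by
    rw [Real.sqrt_eq_rpow, ← Real.rpow_natCast, ← Real.rpow_mul Real.pi_pos.le]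
    congr 1
    ring
  rw [this]
  simp only [smul_eq_mul, nsmul_eq_mul]
  field_simp

theorem stmt_11 (n B : ℕ) (hn : 1 ≤ n) (γ : Fin (B + 1) → Finset (Fin n))
    (hdisj : ∀ b b' : Fin (B + 1), b ≠ b' → Disjoint (γ b) (γ b'))
    (hcover : Finset.univ.biUnion γ = (Finset.univ : Finset (Fin n)))
    (k : Fin (B + 1) → ℕ) (hk : ∀ b, (γ b).card = k b) (hk1 : ∀ b, 1 ≤ k b)
    (σmin σmax : ℝ) (h0 : 0 < σmin) (hσ : σmin < σmax) :
    ∫ c in {c : Fin n → ℝ | ∀ b : Fin (B + 1),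
        σmin ≤ Sg (γ b) c / (k b : ℝ) ∧ Sg (γ b) c / (k b : ℝ) ≤ σmax},
      ∏ b : Fin (B + 1), (Sg (γ b) c) ^ (-(k b : ℝ) / 2)
    = Real.pi ^ ((n : ℝ) / 2) * (Real.log (σmax / σmin)) ^ (B + 1) /
        ∏ b : Fin (B + 1), Real.Gamma ((k b : ℝ) / 2) := by
  have hk0 : ∀ b, (0 : ℝ) < k b := fun b => by exact_mod_cast hk1 b
  have hbij : Function.Bijective (fun p : (Σ b, {i // i ∈ γ b}) => (p.2 : Fin n)) := by
    constructor
    · rintro ⟨b, i, hi⟩ ⟨b', i', hi'⟩ h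
      simp only at h
      subst h
      have : b = b' := by
        by_contra hne
        exact Finset.disjoint_left.1 (hdisj b b' hne) hi hi'
      subst this
      rfl
    · intro i
      have : i ∈ Finset.univ.biUnion γ := by rw [hcover]; exact Finset.mem_univ i
      obtain ⟨b, -, hb⟩ := Finset.mem_biUnion.1 this
      exact ⟨⟨b, i, hb⟩, rfl⟩
  let e : (Σ b, {i // i ∈ γ b}) ≃ Fin n := Equiv.ofBijective _ hbij
  have hnk : n = ∑ b, k b := by
    have := Fintype.card_congr e
    rw [Fintype.card_sigma, Fintype.card_fin] at this
    rw [← this]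
    exact Finset.sum_congr rfl fun b _ => by rw [Fintype.card_coe, hk]
  let G : Fin (B + 1) → ℝ → ℝ := fun b =>
    (Set.Icc (σmin * k b) (σmax * k b)).indicator (fun s : ℝ => s ^ (-(k b : ℝ) / 2))
  have hSm : ∀ b, Measurable (fun c : Fin n → ℝ => Sg (γ b) c) := by
    intro b
    unfold Sg
    fun_prop
  have hmeas : MeasurableSet {c : Fin n → ℝ | ∀ b : Fin (B + 1),
        σmin ≤ Sg (γ b) c / (k b : ℝ) ∧ Sg (γ b) c / (k b : ℝ) ≤ σmax} := by
    have : {c : Fin n → ℝ | ∀ b : Fin (B + 1),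
        σmin ≤ Sg (γ b) c / (k b : ℝ) ∧ Sg (γ b) c / (k b : ℝ) ≤ σmax}
        = ⋂ b, (fun c : Fin n → ℝ => Sg (γ b) c / (k b : ℝ)) ⁻¹' Set.Icc σmin σmax := by
      ext c
      simp
    rw [this]
    exact MeasurableSet.iInter fun b => ((hSm b).div_const _) measurableSet_Icc
  have hint : ∀ c : Fin n → ℝ, Set.indicator {c : Fin n → ℝ | ∀ b : Fin (B + 1),
        σmin ≤ Sg (γ b) c / (k b : ℝ) ∧ Sg (γ b) c / (k b : ℝ) ≤ σmax}
        (fun c => ∏ b : Fin (B + 1), (Sg (γ b) c) ^ (-(k b : ℝ) / 2)) c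
      = ∏ b, G b (Sg (γ b) c) := by
    intro c
    have hiff : ∀ b, (σmin ≤ Sg (γ b) c / (k b : ℝ) ∧ Sg (γ b) c / (k b : ℝ) ≤ σmax)
        ↔ Sg (γ b) c ∈ Set.Icc (σmin * k b) (σmax * k b) := by
      intro b
      rw [le_div_iff₀ (hk0 b), div_le_iff₀ (hk0 b), Set.mem_Icc]
    by_cases h : ∀ b : Fin (B + 1),
        σmin ≤ Sg (γ b) c / (k b : ℝ) ∧ Sg (γ b) c / (k b : ℝ) ≤ σmax
    · rw [Set.indicator_of_mem (by exact h)]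
      refine Finset.prod_congr rfl fun b _ => ?_
      simp only [G]
      rw [Set.indicator_of_mem ((hiff b).1 (h b))]
    · rw [Set.indicator_of_notMem (by exact h)]
      rw [not_forall] at h
      obtain ⟨b, hb⟩ := h
      refine (Finset.prod_eq_zero (Finset.mem_univ b) ?_).symm
      simp only [G]
      rw [Set.indicator_of_notMem (fun hh => hb ((hiff b).2 hh))]
  rw [← integral_indicator hmeas]
  simp_rw [hint]
  have hT := (volume_measurePreserving_piCongrLeft (fun _ : Fin n => ℝ) e).comp
    (aux_curry (fun b => {i // i ∈ γ b}))
  have hT' := hT.integral_comp ((MeasurableEquiv.measurableEmbedding _).comp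
    (MeasurableEquiv.measurableEmbedding _)) (fun c : Fin n → ℝ => ∏ b, G b (Sg (γ b) c))
  rw [← hT']
  have hS : ∀ (y : ∀ b, {i // i ∈ γ b} → ℝ) (b : Fin (B + 1)),
      Sg (γ b) ((⇑(MeasurableEquiv.piCongrLeft (fun _ : Fin n => ℝ) e) ∘
        ⇑(MeasurableEquiv.piCurry fun (b : Fin (B + 1)) (_ : {i // i ∈ γ b}) => ℝ).symm) y)
      = ∑ i, (y b i) ^ 2 := by
    intro y b
    unfold Sg
    rw [← Finset.sum_coe_sort]
    refine Finset.sum_congr rfl fun i _ => ?_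
    congr 1
    exact MeasurableEquiv.piCongrLeft_apply_apply e (β := fun _ => ℝ)
      ((MeasurableEquiv.piCurry fun (b : Fin (B + 1)) (_ : {i // i ∈ γ b}) => ℝ).symm y) ⟨b, i⟩
  simp_rw [hS]
  rw [integral_fintype_prod_volume_eq_prod
    (fun (b : Fin (B + 1)) (x : {i // i ∈ γ b} → ℝ) => G b (∑ i, x i ^ 2))]
  have hblock : ∀ b, ∫ x : {i // i ∈ γ b} → ℝ, G b (∑ i, x i ^ 2)
      = Real.pi ^ ((k b : ℝ) / 2) * Real.log (σmax / σmin) / Real.Gamma ((k b : ℝ) / 2) := by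
    intro b
    have := aux_block (ι := {i // i ∈ γ b}) (k b) (by rw [Fintype.card_coe, hk]) (hk1 b)
      (σmin * k b) (σmax * k b) (mul_pos h0 (hk0 b)) (mul_lt_mul_of_pos_right hσ (hk0 b))
    rw [mul_div_mul_right _ _ (hk0 b).ne'] at this
    exact this
  simp_rw [hblock]
  rw [Finset.prod_div_distrib, Finset.prod_mul_distrib, Finset.prod_const, Finset.card_univ,
    Fintype.card_fin, ← Real.rpow_sum_of_pos Real.pi_pos, ← Finset.sum_div, hnk]
  push_cast
  rfl
end
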